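/- (Pointwise inequality underlying Lemma on translated maxima.) Assume W satisfies (W6)–(W10). Fix t ∈ ℝ and z ∈ ℝ^{2N} with z ≠ 0. For r ≥ −1 and v ∈ ℝ^{2N} define f(r,v) := ( r(r/2 + 1) z + (1 + r) v )·∇W(t,z) + W(t,z) − W(t, (1+r)z + v). Then f(r,v) ≤ 0 for all r ≥ −1 and v ∈ ℝ^{2N}, and f(r,v) < 0 unless r = 0 and v = 0. -/

import Mathlib

open scoped RealInnerProductSpace

/-!
A differentiable radial function `V = W(t, ·)` has the form `V u = H(‖u‖²)`, so that
`∇V u = 2 H'(‖u‖²) u`. In these terms the non-symmetry condition (W10) says exactly that `H'` is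
injective on `(0, ∞)`. By Darboux's theorem an injective derivative is strictly monotone, so `H` is
strictly convex or strictly concave. Concavity is impossible: the superquadraticity (W8) places the
value at `0` of the tangent line to `H` at `‖z‖²` strictly below `0 ≤ H 0`. With
`w = (1 + r) z + v` and `m = H'(‖z‖²) > 0`, completing the square gives
`f(r, v) = H(‖z‖²) + m (‖w‖² - ‖z‖²) - H(‖w‖²) - m ‖v‖²`,
a tangent line minus a strictly convex function, minus a nonnegative term.
-/

section InjectiveDerivative

open Set

theorem strictMonoOn_or_strictAntiOn_of_injOn_of_ordConnected_image {α β : Type*} [LinearOrder α]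
    [LinearOrder β] {f : α → β} {s : Set α} (hs : s.OrdConnected) (hinj : InjOn f s)
    (himage : ∀ t ⊆ s, t.OrdConnected → (f '' t).OrdConnected) :
    StrictMonoOn f s ∨ StrictAntiOn f s := by
  suffices h : MonotoneOn f s ∨ AntitoneOn f s from
    h.imp (·.strictMonoOn_of_injOn hinj) (·.strictAntiOn_of_injOn hinj)
  by_contra! hnot
  obtain ⟨a, ha, b, hb, c, hc, hab, hbc, hextremum⟩ :=
    not_monotoneOn_not_antitoneOn_iff_exists_lt_lt.1 hnot
  have mem_of_between {x y p : α} (hx : x ∈ s) (hy : y ∈ s) (hp : p ∈ s) (hxy : x ≤ y)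
      (hbetween : f p ∈ Icc (f x) (f y) ∨ f p ∈ Icc (f y) (f x)) : p ∈ Icc x y := by
    have hsub : Icc x y ⊆ s := hs.out hx hy
    have hconn : (f '' Icc x y).OrdConnected := himage _ hsub ordConnected_Icc
    have hfx : f x ∈ f '' Icc x y := mem_image_of_mem f (left_mem_Icc.2 hxy)
    have hfy : f y ∈ f '' Icc x y := mem_image_of_mem f (right_mem_Icc.2 hxy)
    have hfp : f p ∈ f '' Icc x y :=
      hbetween.elim (fun h => hconn.out hfx hfy h) (fun h => hconn.out hfy hfx h)
    exact (hinj.mem_image_iff hsub hp).1 hfp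
  -- At a peak or a valley `b`, whichever of `f a`, `f c` is closer to `f b` is also taken on the
  -- other side of `b`.
  have hc_or_ha : c ∈ Icc a b ∨ a ∈ Icc b c := by
    rcases hextremum with ⟨hpeak_a, hpeak_c⟩ | ⟨hvalley_a, hvalley_c⟩ <;>
      rcases le_total (f a) (f c) with hac | hca
    · exact .inl (mem_of_between ha hb hc hab.le (.inl ⟨hac, hpeak_c.le⟩))
    · exact .inr (mem_of_between hb hc ha hbc.le (.inr ⟨hca, hpeak_a.le⟩))
    · exact .inr (mem_of_between hb hc ha hbc.le (.inl ⟨hvalley_a.le, hac⟩))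
    · exact .inl (mem_of_between ha hb hc hab.le (.inr ⟨hvalley_c.le, hca⟩))
  exact hc_or_ha.elim (fun h => hbc.not_ge h.2) (fun h => hab.not_ge h.1)

variable {f : ℝ → ℝ} {D : Set ℝ} {x y : ℝ}

theorem strictMonoOn_or_strictAntiOn_deriv_of_injOn {s : Set ℝ} (hs : s.OrdConnected)
    (hf : ∀ x ∈ s, DifferentiableAt ℝ f x) (hinj : InjOn (deriv f) s) :
    StrictMonoOn (deriv f) s ∨ StrictAntiOn (deriv f) s :=
  strictMonoOn_or_strictAntiOn_of_injOn_of_ordConnected_image hs hinj fun _ hts ht =>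
    ht.image_deriv fun x hx => hf x (hts hx)

theorem strictConvexOn_or_strictConcaveOn_of_injOn_deriv (hD : Convex ℝ D)
    (hcont : ContinuousOn f D) (hdiff : DifferentiableOn ℝ f (interior D))
    (hinj : InjOn (deriv f) (interior D)) : StrictConvexOn ℝ D f ∨ StrictConcaveOn ℝ D f :=
  (strictMonoOn_or_strictAntiOn_deriv_of_injOn hD.interior.ordConnected
    (fun _ hx => hdiff.differentiableAt (isOpen_interior.mem_nhds hx)) hinj).imp
    (·.strictConvexOn_of_deriv hD hcont) (·.strictConcaveOn_of_deriv hD hcont)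

theorem add_deriv_mul_sub_lt_of_strictConvexOn (hf : StrictConvexOn ℝ D f) (hx : x ∈ D)
    (hy : y ∈ D) (hdiff : DifferentiableAt ℝ f x) (hyx : y ≠ x) :
    f x + deriv f x * (y - x) < f y := by
  rcases hyx.lt_or_gt with hlt | hgt
  · have hslope := hf.slope_lt_of_hasDerivAt hy hx hlt hdiff.hasDerivAt
    rw [slope_def_field, div_lt_iff₀ (sub_pos.2 hlt)] at hslope
    linarith
  · have hslope := hf.lt_slope_of_hasDerivAt hx hy hgt hdiff.hasDerivAt
    rw [slope_def_field, lt_div_iff₀ (sub_pos.2 hgt)] at hslope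
    linarith

theorem add_deriv_mul_sub_sub_le_of_strictConvexOn {c : ℝ} (hf : StrictConvexOn ℝ D f)
    (hx : x ∈ D) (hy : y ∈ D) (hdiff : DifferentiableAt ℝ f x) (hderiv : 0 ≤ deriv f x)
    (hc : 0 ≤ c) : f x + deriv f x * (y - x - c) ≤ f y := by
  have hmul : 0 ≤ deriv f x * c := mul_nonneg hderiv hc
  rcases eq_or_ne y x with rfl | hyx
  · linarith
  · linarith [add_deriv_mul_sub_lt_of_strictConvexOn hf hx hy hdiff hyx]

theorem add_deriv_mul_sub_sub_eq_iff_of_strictConvexOn {c : ℝ} (hf : StrictConvexOn ℝ D f)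
    (hx : x ∈ D) (hy : y ∈ D) (hdiff : DifferentiableAt ℝ f x) (hderiv : 0 < deriv f x)
    (hc : 0 ≤ c) : f x + deriv f x * (y - x - c) = f y ↔ y = x ∧ c = 0 := by
  rcases eq_or_ne y x with rfl | hyx
  · simp [hderiv.ne']
  · have hmul : 0 ≤ deriv f x * c := mul_nonneg hderiv.le hc
    have htangent := add_deriv_mul_sub_lt_of_strictConvexOn hf hx hy hdiff hyx
    exact iff_of_false (fun heq => by linarith) (fun h => hyx h.1)

theorem lt_add_deriv_mul_sub_of_strictConcaveOn (hf : StrictConcaveOn ℝ D f) (hx : x ∈ D)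
    (hy : y ∈ D) (hdiff : DifferentiableAt ℝ f x) (hyx : y ≠ x) :
    f y < f x + deriv f x * (y - x) := by
  have hneg := add_deriv_mul_sub_lt_of_strictConvexOn hf.neg hx hy hdiff.neg hyx
  rw [deriv.neg, Pi.neg_apply, Pi.neg_apply] at hneg
  linarith

theorem strictConvexOn_of_injOn_deriv_of_add_deriv_mul_sub_le (hD : Convex ℝ D)
    (hcont : ContinuousOn f D) (hdiff : DifferentiableOn ℝ f (interior D))
    (hinj : InjOn (deriv f) (interior D)) (hx : x ∈ interior D) (hy : y ∈ D) (hyx : y ≠ x)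
    (htangent : f x + deriv f x * (y - x) ≤ f y) : StrictConvexOn ℝ D f :=
  (strictConvexOn_or_strictConcaveOn_of_injOn_deriv hD hcont hdiff hinj).resolve_right
    fun hconcave => htangent.not_gt <|
      lt_add_deriv_mul_sub_of_strictConcaveOn hconcave (interior_subset hx) hy
        (hdiff.differentiableAt (isOpen_interior.mem_nhds hx)) hyx

theorem strictConvexOn_Ici_of_injOn_deriv_of_lt_deriv_mul (hcont : ContinuousOn f (Ici 0))
    (hdiff : DifferentiableOn ℝ f (Ioi 0)) (hinj : InjOn (deriv f) (Ioi 0)) (hzero : 0 ≤ f 0)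
    (hx : 0 < x) (hlt : f x < deriv f x * x) : StrictConvexOn ℝ (Ici 0) f := by
  rw [← interior_Ici] at hdiff hinj
  refine strictConvexOn_of_injOn_deriv_of_add_deriv_mul_sub_le (convex_Ici 0) hcont hdiff hinj
    (x := x) (by rwa [interior_Ici]) self_mem_Ici hx.ne ?_
  linarith

end InjectiveDerivative

section NormedSpace

variable {E : Type*} [NormedAddCommGroup E] [NormedSpace ℝ E]

theorem exists_eq_comp_norm_sq [Nontrivial E] {F : Type*} [NormedAddCommGroup F] [NormedSpace ℝ F]
    {V : E → F} (hV : Differentiable ℝ V) (hradial : ∀ u v, ‖u‖ = ‖v‖ → V u = V v) :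
    ∃ H : ℝ → F, Continuous H ∧ DifferentiableOn ℝ H (Set.Ioi 0) ∧ V = fun u => H (‖u‖ ^ 2) := by
  obtain ⟨e, he⟩ := exists_norm_eq E zero_le_one
  refine ⟨fun σ => V (√σ • e), hV.continuous.comp (by fun_prop), fun σ hσ => ?_, ?_⟩
  · have hsqrt : DifferentiableAt ℝ (fun σ => √σ • e) σ :=
      (differentiableAt_id.sqrt (ne_of_gt hσ)).smul_const e
    exact ((hV _).comp σ hsqrt).differentiableWithinAt
  · funext u
    refine hradial _ _ ?_
    rw [Real.sqrt_sq (norm_nonneg u), norm_smul, norm_norm, he, mul_one]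

theorem norm_one_add_smul_eq_iff {z : E} (hz : z ≠ 0) {r : ℝ} :
    ‖(1 + r) • z‖ = ‖z‖ ↔ r = 0 ∨ r = -2 := by
  rw [norm_smul, mul_eq_right₀ (norm_ne_zero_iff.2 hz), Real.norm_eq_abs, abs_eq zero_le_one]
  refine or_congr add_eq_left ⟨fun h => ?_, fun h => ?_⟩ <;> linarith

theorem norm_one_add_smul_add_sq_eq_and_norm_sq_eq_zero_iff {z : E} (hz : z ≠ 0) {r : ℝ} {v : E} :
    ‖(1 + r) • z + v‖ ^ 2 = ‖z‖ ^ 2 ∧ ‖v‖ ^ 2 = 0 ↔ (r = 0 ∨ r = -2) ∧ v = 0 := by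
  rw [sq_eq_sq₀ (norm_nonneg _) (norm_nonneg z), sq_eq_zero_iff, norm_eq_zero]
  refine and_congr_left fun hv => ?_
  rw [hv, add_zero, norm_one_add_smul_eq_iff hz]

end NormedSpace

section InnerProductSpace

open Set

variable {E : Type*} [NormedAddCommGroup E] [InnerProductSpace ℝ E] {H : ℝ → ℝ}

theorem inner_smul_add_smul_self (r : ℝ) (z v : E) :
    ⟪(r * (r / 2 + 1)) • z + (1 + r) • v, z⟫
      = (‖(1 + r) • z + v‖ ^ 2 - ‖z‖ ^ 2 - ‖v‖ ^ 2) / 2 := by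
  simp only [← real_inner_self_eq_norm_sq, inner_add_left, inner_add_right, real_inner_smul_left,
    real_inner_smul_right, real_inner_comm v z]
  ring

variable [CompleteSpace E]

theorem gradient_comp_norm_sq {u : E} (hH : DifferentiableAt ℝ H (‖u‖ ^ 2)) :
    gradient (fun u : E => H (‖u‖ ^ 2)) u = (2 * deriv H (‖u‖ ^ 2)) • u := by
  have hchain := hH.hasDerivAt.comp_hasFDerivAt u (hasStrictFDerivAt_norm_sq u).hasFDerivAt
  refine HasGradientAt.gradient (hasGradientAt_iff_hasFDerivAt.2 (hchain.congr_fderiv ?_))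
  ext v
  simp only [smul_apply, coe_innerSL_apply, nsmul_eq_mul, Nat.cast_ofNat, smul_eq_mul, map_smul,
    InnerProductSpace.toDual_apply_apply]
  ring

theorem injOn_deriv_of_inner_gradient_ne [Nontrivial E] (hH : DifferentiableOn ℝ H (Ioi 0))
    (hne : ∀ u v : E, ‖u‖ ≠ ‖v‖ → ⟪u, v⟫ ≠ 0 →
      ⟪v, gradient (fun u : E => H (‖u‖ ^ 2)) u⟫ ≠ ⟪u, gradient (fun u : E => H (‖u‖ ^ 2)) v⟫) :
    InjOn (deriv H) (Ioi 0) := by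
  intro a ha b hb hab
  by_contra hab_ne
  obtain ⟨e, he⟩ := exists_norm_eq E zero_le_one
  have norm_sqrt_smul (c : ℝ) : ‖√c • e‖ = √c := by
    rw [norm_smul, he, mul_one, Real.norm_of_nonneg (Real.sqrt_nonneg c)]
  have gradient_sqrt_smul {c : ℝ} (hc : 0 < c) :
      gradient (fun u : E => H (‖u‖ ^ 2)) (√c • e) = (2 * deriv H c) • √c • e := by
    have hnorm_sq : ‖√c • e‖ ^ 2 = c := by rw [norm_sqrt_smul, Real.sq_sqrt hc.le]
    have hdiff : DifferentiableAt ℝ H c := hH.differentiableAt (Ioi_mem_nhds hc)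
    rw [gradient_comp_norm_sq (by rwa [hnorm_sq]), hnorm_sq]
  refine hne (√a • e) (√b • e) ?_ ?_ ?_
  · rw [norm_sqrt_smul, norm_sqrt_smul]
    exact fun h => hab_ne ((Real.sqrt_inj (le_of_lt ha) (le_of_lt hb)).1 h)
  · rw [real_inner_smul_left, real_inner_smul_right, real_inner_self_eq_norm_sq, he]
    have := Real.sqrt_pos.2 ha
    have := Real.sqrt_pos.2 hb
    positivity
  · rw [gradient_sqrt_smul ha, gradient_sqrt_smul hb, hab, real_inner_smul_right (√b • e),
      real_inner_smul_right (√a • e), real_inner_comm]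

end InnerProductSpace

theorem stmt8_general {E : Type*} [NormedAddCommGroup E] [InnerProductSpace ℝ E] [CompleteSpace E]
    {V : E → ℝ} (hV : Differentiable ℝ V) (hnonneg : ∀ u, u ≠ 0 → 0 ≤ V u)
    (hradial : ∀ u v, ‖u‖ = ‖v‖ → V u = V v)
    (hne : ∀ u v, ‖u‖ ≠ ‖v‖ → ⟪u, v⟫ ≠ 0 → ⟪v, gradient V u⟫ ≠ ⟪u, gradient V v⟫)
    {z : E} (hz : z ≠ 0) (hsuper : 2 * V z < ⟪z, gradient V z⟫) (r : ℝ) (v : E) :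
    ⟪(r * (r / 2 + 1)) • z + (1 + r) • v, gradient V z⟫ + V z - V ((1 + r) • z + v) ≤ 0 ∧
      (⟪(r * (r / 2 + 1)) • z + (1 + r) • v, gradient V z⟫ + V z - V ((1 + r) • z + v) = 0 ↔
        (r = 0 ∨ r = -2) ∧ v = 0) := by
  have : Nontrivial E := ⟨z, 0, hz⟩
  obtain ⟨H, hHcont, hHdiff, rfl⟩ := exists_eq_comp_norm_sq hV hradial
  have hz_sq : 0 < ‖z‖ ^ 2 := by positivity
  have hHz : DifferentiableAt ℝ H (‖z‖ ^ 2) := hHdiff.differentiableAt (Ioi_mem_nhds hz_sq)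
  have hH_zero : 0 ≤ H (‖(0 : E)‖ ^ 2) :=
    ge_of_tendsto (hV.continuous.continuousWithinAt (s := {0}ᶜ))
      (eventually_mem_nhdsWithin.mono hnonneg)
  rw [norm_zero, zero_pow two_ne_zero] at hH_zero
  have htangent_zero : H (‖z‖ ^ 2) < deriv H (‖z‖ ^ 2) * ‖z‖ ^ 2 := by
    rw [gradient_comp_norm_sq hHz, real_inner_smul_right, real_inner_self_eq_norm_sq] at hsuper
    linarith
  have hderiv : 0 < deriv H (‖z‖ ^ 2) :=
    pos_of_mul_pos_left ((hnonneg z hz).trans_lt htangent_zero) hz_sq.le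
  have hconvex : StrictConvexOn ℝ (Set.Ici 0) H :=
    strictConvexOn_Ici_of_injOn_deriv_of_lt_deriv_mul hHcont.continuousOn hHdiff
      (injOn_deriv_of_inner_gradient_ne hHdiff hne) hH_zero hz_sq htangent_zero
  have hcomplete_square :
      ⟪(r * (r / 2 + 1)) • z + (1 + r) • v, gradient (fun u : E => H (‖u‖ ^ 2)) z⟫ + H (‖z‖ ^ 2)
        = H (‖z‖ ^ 2)
          + deriv H (‖z‖ ^ 2) * (‖(1 + r) • z + v‖ ^ 2 - ‖z‖ ^ 2 - ‖v‖ ^ 2) := by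
    rw [gradient_comp_norm_sq hHz, real_inner_smul_right, inner_smul_add_smul_self]
    ring
  rw [hcomplete_square, sub_nonpos, sub_eq_zero,
    ← norm_one_add_smul_add_sq_eq_and_norm_sq_eq_zero_iff hz]
  have hw_mem : ‖(1 + r) • z + v‖ ^ 2 ∈ Set.Ici (0 : ℝ) := Set.mem_Ici.2 (sq_nonneg _)
  have hv_sq : 0 ≤ ‖v‖ ^ 2 := sq_nonneg _
  exact
    ⟨add_deriv_mul_sub_sub_le_of_strictConvexOn hconvex hz_sq.le hw_mem hHz hderiv.le hv_sq,
      add_deriv_mul_sub_sub_eq_iff_of_strictConvexOn hconvex hz_sq.le hw_mem hHz hderiv hv_sq⟩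

/-- pointwise inequality underlying the lemma on translated maxima.
Under (W6)–(W10), for fixed `t` and `z ≠ 0`, the function
`f(r,v) = (r(r/2+1)z + (1+r)v)·∇W(t,z) + W(t,z) − W(t,(1+r)z+v)`
is `≤ 0` on `[−1,∞) × ℝ^{2N}`, and `< 0` unless `(r,v) = (0,0)`. -/
theorem stmt8 (N : ℕ) (hN : 1 ≤ N)
    (W : ℝ → EuclideanSpace ℝ (Fin (2 * N)) → ℝ)
    (hWC1 : ContDiff ℝ 1 (fun q : ℝ × EuclideanSpace ℝ (Fin (2 * N)) => W q.1 q.2))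
    (hW6 : ∀ (t : ℝ) (u v : EuclideanSpace ℝ (Fin (2 * N))),
      0 ≤ ⟪v, gradient (W t) u⟫ * ⟪u, v⟫)
    (hW7 : ∃ γ > (2 : ℝ), ∀ M > (0 : ℝ), ∃ R > (0 : ℝ),
      ∀ (t : ℝ) (u : EuclideanSpace ℝ (Fin (2 * N))), R ≤ ‖u‖ → M * ‖u‖ ^ γ ≤ W t u)
    (hW8 : ∀ (t : ℝ) (u : EuclideanSpace ℝ (Fin (2 * N))), u ≠ 0 →
      0 < W t u ∧ 2 * W t u < ⟪u, gradient (W t) u⟫)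
    (hW9 : ∀ (t : ℝ) (u v : EuclideanSpace ℝ (Fin (2 * N))), ‖u‖ = ‖v‖ →
      W t u = W t v ∧ ⟪v, gradient (W t) u⟫ ≤ ⟪u, gradient (W t) u⟫ ∧
        (u ≠ v → ⟪v, gradient (W t) u⟫ < ⟪u, gradient (W t) u⟫))
    (hW10 : ∀ (t : ℝ) (u v : EuclideanSpace ℝ (Fin (2 * N))), ‖u‖ ≠ ‖v‖ → ⟪u, v⟫ ≠ 0 →
      ⟪v, gradient (W t) u⟫ ≠ ⟪u, gradient (W t) v⟫)
    (t : ℝ) (z : EuclideanSpace ℝ (Fin (2 * N))) (hz : z ≠ 0) :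
    ∀ r : ℝ, -1 ≤ r → ∀ v : EuclideanSpace ℝ (Fin (2 * N)),
      (⟪(r * (r / 2 + 1)) • z + (1 + r) • v, gradient (W t) z⟫ + W t z
          - W t ((1 + r) • z + v) ≤ 0) ∧
      (¬(r = 0 ∧ v = 0) →
        ⟪(r * (r / 2 + 1)) • z + (1 + r) • v, gradient (W t) z⟫ + W t z
          - W t ((1 + r) • z + v) < 0) := by
  intro r hr v
  have hWt : Differentiable ℝ (W t) :=
    (hWC1.differentiable one_ne_zero).comp ((differentiable_const t).prodMk differentiable_id)
  obtain ⟨hle, heq⟩ := stmt8_general hWt (fun u hu => (hW8 t u hu).1.le)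
    (fun u v huv => (hW9 t u v huv).1) (hW10 t) hz (hW8 t z hz).2 r v
  exact ⟨hle, fun hrv => hle.lt_of_ne fun hzero =>
    hrv ((heq.1 hzero).imp_left (·.resolve_right (by linarith)))⟩
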